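/- The variety of monoids and the variety of commutative monoids lack a Beth companion. -/

import Mathlib

namespace Impl

open FirstOrder Language

universe u v

/-- A bundled algebra (first-order structure) for the language `L`. -/
structure Alg (L : FirstOrder.Language.{u, u}) : Type (u + 1) where
  carrier : Type u
  [str : L.Structure carrier]

attribute [instance] Alg.str

variable {L : FirstOrder.Language.{u, u}}

/-- The direct product of a family of algebras. -/
def Alg.pi {ι : Type u} (A : ι → Alg L) : Alg L where
  carrier := ∀ i, (A i).carrier
  str :=
    { funMap := fun {k} f v i => Structure.funMap f fun j => v j i
      RelMap := fun {k} r v => ∀ i, Structure.RelMap r fun j => v j i }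

/-- The binary direct product of two algebras. -/
def Alg.prod (A B : Alg L) : Alg L where
  carrier := A.carrier × B.carrier
  str :=
    { funMap := fun {k} f v =>
        (Structure.funMap f fun j => (v j).1, Structure.funMap f fun j => (v j).2)
      RelMap := fun {k} r v =>
        Structure.RelMap r (fun j => (v j).1) ∧ Structure.RelMap r fun j => (v j).2 }

/-- The ultraproduct of a family of algebras with respect to an ultrafilter. -/
def Alg.uprod {ι : Type u} (F : Ultrafilter ι) (A : ι → Alg L) : Alg L where
  carrier := Filter.Product (F : Filter ι) fun i => (A i).carrier
  str := inferInstance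

/-- Closure under isomorphic copies. -/
def ClosedUnderIso (K : Set (Alg L)) : Prop :=
  ∀ A B : Alg L, A ∈ K → Nonempty (A.carrier ≃[L] B.carrier) → B ∈ K

/-- Closure under subalgebras (up to the identification of a subalgebra with an embedding). -/
def ClosedUnderSub (K : Set (Alg L)) : Prop :=
  ∀ A B : Alg L, B ∈ K → Nonempty (A.carrier ↪[L] B.carrier) → A ∈ K

/-- Closure under direct products. -/
def ClosedUnderProd (K : Set (Alg L)) : Prop :=
  ∀ (ι : Type u) (A : ι → Alg L), (∀ i, A i ∈ K) → Alg.pi A ∈ K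

/-- Closure under finite direct products. -/
def ClosedUnderFinProd (K : Set (Alg L)) : Prop :=
  ∀ (ι : Type u), Finite ι → ∀ A : ι → Alg L, (∀ i, A i ∈ K) → Alg.pi A ∈ K

/-- Closure under homomorphic images. -/
def ClosedUnderHomImg (K : Set (Alg L)) : Prop :=
  ∀ A B : Alg L, A ∈ K → ∀ h : A.carrier →[L] B.carrier, Function.Surjective h → B ∈ K

/-- Closure under ultraproducts. -/
def ClosedUnderUprod (K : Set (Alg L)) : Prop :=
  ∀ (ι : Type u) (F : Ultrafilter ι) (A : ι → Alg L), (∀ i, A i ∈ K) → Alg.uprod F A ∈ K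

/-- A universal class: a class closed under isomorphic copies, subalgebras and ultraproducts. -/
def IsUniversalClass (K : Set (Alg L)) : Prop :=
  ClosedUnderIso K ∧ ClosedUnderSub K ∧ ClosedUnderUprod K

/-- A quasivariety: a class closed under isomorphic copies, subalgebras, direct products and
ultraproducts. -/
def IsQuasivariety (K : Set (Alg L)) : Prop :=
  ClosedUnderIso K ∧ ClosedUnderSub K ∧ ClosedUnderProd K ∧ ClosedUnderUprod K

/-- A variety: a class closed under homomorphic images, subalgebras and direct products. -/
def IsVariety (K : Set (Alg L)) : Prop :=
  ClosedUnderHomImg K ∧ ClosedUnderSub K ∧ ClosedUnderProd K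

/-- The least quasivariety containing `K`. -/
def QGen (K : Set (Alg L)) : Set (Alg L) :=
  ⋂₀ { M : Set (Alg L) | IsQuasivariety M ∧ K ⊆ M }

/-- The least variety containing `K`. -/
def VGen (K : Set (Alg L)) : Set (Alg L) :=
  ⋂₀ { M : Set (Alg L) | IsVariety M ∧ K ⊆ M }

/-- An elementary class: the class of all models of some first-order theory. -/
def IsElementary (K : Set (Alg L)) : Prop :=
  ∃ T : L.Theory, ∀ A : Alg L, A ∈ K ↔ ∀ φ ∈ T, A.carrier ⊨ φ

/-- Finite conjunctions of equations (with `⊤` as the empty conjunction). -/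
inductive IsConjEq {α : Type v} : ∀ {k : ℕ}, L.BoundedFormula α k → Prop
  | top {k} : IsConjEq (⊤ : L.BoundedFormula α k)
  | equal {k} (t₁ t₂ : L.Term (α ⊕ Fin k)) : IsConjEq (BoundedFormula.equal t₁ t₂)
  | inf {k} {φ ψ : L.BoundedFormula α k} : IsConjEq φ → IsConjEq ψ → IsConjEq (φ ⊓ ψ)

/-- Positive quantifier-free formulas: built from equations, `⊤` and `⊥` using `⊓` and `⊔`. -/
inductive IsPosQF {α : Type v} : ∀ {k : ℕ}, L.BoundedFormula α k → Prop
  | falsum {k} : IsPosQF (⊥ : L.BoundedFormula α k)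
  | top {k} : IsPosQF (⊤ : L.BoundedFormula α k)
  | equal {k} (t₁ t₂ : L.Term (α ⊕ Fin k)) : IsPosQF (BoundedFormula.equal t₁ t₂)
  | inf {k} {φ ψ : L.BoundedFormula α k} : IsPosQF φ → IsPosQF ψ → IsPosQF (φ ⊓ ψ)
  | sup {k} {φ ψ : L.BoundedFormula α k} : IsPosQF φ → IsPosQF ψ → IsPosQF (φ ⊔ ψ)

/-- Primitive positive (pp) formulas: existentially quantified finite conjunctions of
equations. -/
inductive IsPP {α : Type v} : ∀ {k : ℕ}, L.BoundedFormula α k → Prop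
  | of_conjEq {k} {φ : L.BoundedFormula α k} : IsConjEq φ → IsPP φ
  | ex {k} {φ : L.BoundedFormula α (k + 1)} : IsPP φ → IsPP φ.ex

/-- Existential positive formulas: existentially quantified positive quantifier-free
formulas. -/
inductive IsExistPos {α : Type v} : ∀ {k : ℕ}, L.BoundedFormula α k → Prop
  | of_posQF {k} {φ : L.BoundedFormula α k} : IsPosQF φ → IsExistPos φ
  | ex {k} {φ : L.BoundedFormula α (k + 1)} : IsExistPos φ → IsExistPos φ.ex

/-- Two formulas are equivalent in a class of algebras. -/
def EquivOn (K : Set (Alg L)) {α : Type v} (φ ψ : L.Formula α) : Prop :=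
  ∀ A : Alg L, A ∈ K → ∀ x : α → A.carrier, φ.Realize x ↔ ψ.Realize x

/-- A formula is preserved by homomorphisms in `K`. -/
def PreservedByHomsOn (K : Set (Alg L)) {α : Type v} (φ : L.Formula α) : Prop :=
  ∀ A B : Alg L, A ∈ K → B ∈ K → ∀ (h : A.carrier →[L] B.carrier) (x : α → A.carrier),
    φ.Realize x → φ.Realize fun a => h (x a)

/-- A formula is preserved by direct products in `K`. -/
def PreservedByProdsOn (K : Set (Alg L)) {α : Type v} (φ : L.Formula α) : Prop :=
  ∀ (ι : Type u) (A : ι → Alg L), (∀ i, A i ∈ K) → ∀ x : α → (Alg.pi A).carrier,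
    (∀ i, φ.Realize fun a => x a i) → φ.Realize x

/-- An `n`-ary partial function on a class of algebras `K`: a family assigning to each member of
`K` an `n`-ary partial function on its carrier. -/
def PartialFunOn (K : Set (Alg L)) (n : ℕ) :=
  ∀ (A : Alg L), A ∈ K → ((Fin n → A.carrier) →. A.carrier)

/-- A partial function on `K` is defined by the formula `φ(x₁, …, xₙ, y)` (the last variable
being the output) when its graph on each member of `K` is the solution set of `φ`. -/
def DefinedBy {K : Set (Alg L)} {n : ℕ} (f : PartialFunOn K n)
    (φ : L.Formula (Fin (n + 1))) : Prop :=
  ∀ (A : Alg L) (hA : A ∈ K) (x : Fin n → A.carrier) (b : A.carrier),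
    b ∈ f A hA x ↔ φ.Realize (Fin.snoc x b)

/-- The formula `φ(x₁, …, xₙ, y)` is functional in `K`: for all inputs there is at most one
output satisfying it. -/
def FunctionalIn (K : Set (Alg L)) {n : ℕ} (φ : L.Formula (Fin (n + 1))) : Prop :=
  ∀ A : Alg L, A ∈ K → ∀ (x : Fin n → A.carrier) (b₁ b₂ : A.carrier),
    φ.Realize (Fin.snoc x b₁) → φ.Realize (Fin.snoc x b₂) → b₁ = b₂

/-- A partial function on `K` is an operation of `K` when it is preserved by all homomorphisms
between members of `K`. -/
def IsOperationOn {K : Set (Alg L)} {n : ℕ} (f : PartialFunOn K n) : Prop :=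
  ∀ (A B : Alg L) (hA : A ∈ K) (hB : B ∈ K) (h : A.carrier →[L] B.carrier)
    (x : Fin n → A.carrier) (b : A.carrier),
    b ∈ f A hA x → h b ∈ f B hB fun i => h (x i)

/-- A partial function on `K` is implicit when it is defined by some formula. -/
def IsImplicit {K : Set (Alg L)} {n : ℕ} (f : PartialFunOn K n) : Prop :=
  ∃ φ : L.Formula (Fin (n + 1)), DefinedBy f φ

/-- An implicit operation of `K`: a partial function that is both implicit and an operation. -/
def IsImplicitOp {K : Set (Alg L)} {n : ℕ} (f : PartialFunOn K n) : Prop :=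
  IsImplicit f ∧ IsOperationOn f

/-- An implicit operation is extendable when every tuple in every member of `K` lies in the
domain of the operation in some extension inside `K`. -/
def Extendable {K : Set (Alg L)} {n : ℕ} (f : PartialFunOn K n) : Prop :=
  ∀ (A : Alg L) (hA : A ∈ K) (x : Fin n → A.carrier),
    ∃ (B : Alg L) (hB : B ∈ K) (e : A.carrier ↪[L] B.carrier),
      (f B hB fun i => e (x i)).Dom

/-- The dominion of a subset `s` of `M` relative to the class `K`. -/
def dominion (K : Set (Alg L)) (M : Type u) [L.Structure M] (s : Set M) : Set M :=
  { b | ∀ C : Alg L, C ∈ K → ∀ g h : M →[L] C.carrier, (∀ a ∈ s, g a = h a) → g b = h b }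

/-- The strong epimorphism surjectivity property. -/
def StrongES (K : Set (Alg L)) : Prop :=
  ∀ (A B : Alg L), A ∈ K → B ∈ K → ∀ (f : A.carrier →[L] B.carrier) (b : B.carrier),
    b ∉ Set.range f →
      ∃ C : Alg L, C ∈ K ∧ ∃ g h : B.carrier →[L] C.carrier,
        (∀ a : A.carrier, g (f a) = h (f a)) ∧ g b ≠ h b

/-- The weak epimorphism surjectivity property: every `K`-epimorphism between finitely
generated members of `K` is surjective. -/
def WeakES (K : Set (Alg L)) : Prop :=
  ∀ (A B : Alg L), A ∈ K → B ∈ K →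
    Structure.FG L A.carrier → Structure.FG L B.carrier →
      ∀ f : A.carrier →[L] B.carrier,
        (∀ C : Alg L, C ∈ K → ∀ g h : B.carrier →[L] C.carrier,
          (∀ a : A.carrier, g (f a) = h (f a)) → g = h) →
        Function.Surjective f

/-- The amalgamation property. -/
def HasAmalgamation (K : Set (Alg L)) : Prop :=
  ∀ (A B C : Alg L), A ∈ K → B ∈ K → C ∈ K →
    ∀ (f : A.carrier ↪[L] B.carrier) (g : A.carrier ↪[L] C.carrier),
      ∃ D : Alg L, D ∈ K ∧ ∃ (f' : B.carrier ↪[L] D.carrier) (g' : C.carrier ↪[L] D.carrier),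
        ∀ a : A.carrier, f' (f a) = g' (g a)

/-- A finitely presented member of `K`: an algebra in `K` with a finite presentation, phrased
through the usual universal property of `T(X)/Cg_K(Y)`. -/
def FinitelyPresentedIn (K : Set (Alg L)) (B : Alg L) : Prop :=
  B ∈ K ∧ ∃ (m : ℕ) (Y : Finset (L.Term (Fin m) × L.Term (Fin m))) (b : Fin m → B.carrier),
    Substructure.closure L (Set.range b) = ⊤ ∧
    (∀ p ∈ Y, p.1.realize b = p.2.realize b) ∧
    ∀ C : Alg L, C ∈ K → ∀ x : Fin m → C.carrier,
      (∀ p ∈ Y, p.1.realize x = p.2.realize x) →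
        ∃ g : B.carrier →[L] C.carrier, ∀ i, g (b i) = x i

/-- Subdirectly irreducible relative to `K`. -/
def IsRSI (K : Set (Alg L)) (A : Alg L) : Prop :=
  A ∈ K ∧ ∀ (ι : Type u) (B : ι → Alg L), (∀ i, B i ∈ K) →
    ∀ h : A.carrier ↪[L] (Alg.pi B).carrier,
      (∀ i, Function.Surjective fun a => h a i) →
        ∃ i, Function.Bijective fun a => h a i

/-- Finitely subdirectly irreducible relative to `K`. -/
def IsRFSI (K : Set (Alg L)) (A : Alg L) : Prop :=
  A ∈ K ∧ ∀ (ι : Type u), Finite ι → ∀ B : ι → Alg L, (∀ i, B i ∈ K) →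
    ∀ h : A.carrier ↪[L] (Alg.pi B).carrier,
      (∀ i, Function.Surjective fun a => h a i) →
        ∃ i, Function.Bijective fun a => h a i

/-- A congruence on an algebra: an equivalence relation compatible with all the operations. -/
def IsCongruenceOn (A : Alg L) (θ : A.carrier → A.carrier → Prop) : Prop :=
  Equivalence θ ∧
    ∀ (k : ℕ) (f : L.Functions k) (x y : Fin k → A.carrier),
      (∀ i, θ (x i) (y i)) → θ (Structure.funMap f x) (Structure.funMap f y)

/-- The quotient of an algebra by (the setoid of) an equivalence relation; when the relation is
a congruence this is the quotient algebra. -/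
noncomputable def Alg.quot (A : Alg L) (θ : A.carrier → A.carrier → Prop) (h : Equivalence θ) :
    Alg L where
  carrier := Quotient (⟨θ, h⟩ : Setoid A.carrier)
  str :=
    { funMap := fun {k} f v => Quotient.mk _ (Structure.funMap f fun i => (v i).out)
      RelMap := fun {k} r v => Structure.RelMap r fun i => (v i).out }

/-- A `K`-congruence of `A`: a congruence whose quotient lies in `K`. -/
def IsRelCong (K : Set (Alg L)) (A : Alg L) (θ : A.carrier → A.carrier → Prop) : Prop :=
  ∃ h : IsCongruenceOn A θ, Alg.quot A θ h.1 ∈ K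

/-- The join of two relations in the lattice of `K`-congruences of `A`. -/
def relCongJoin (K : Set (Alg L)) (A : Alg L)
    (θ φ : A.carrier → A.carrier → Prop) (x y : A.carrier) : Prop :=
  ∀ ρ : A.carrier → A.carrier → Prop, IsRelCong K A ρ →
    (∀ a b, θ a b → ρ a b) → (∀ a b, φ a b → ρ a b) → ρ x y

/-- Relative congruence distributivity: the lattice of `K`-congruences of each member of `K`
is distributive. -/
def RelCongDistributive (K : Set (Alg L)) : Prop :=
  ∀ A : Alg L, A ∈ K → ∀ θ φ ψ : A.carrier → A.carrier → Prop,
    IsRelCong K A θ → IsRelCong K A φ → IsRelCong K A ψ →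
      ∀ x y : A.carrier,
        (θ x y ∧ relCongJoin K A φ ψ x y) ↔
          relCongJoin K A (fun a b => θ a b ∧ φ a b) (fun a b => θ a b ∧ ψ a b) x y

/-- The join of two relations in the lattice of congruences of `A`. -/
def congJoin (A : Alg L) (θ φ : A.carrier → A.carrier → Prop) (x y : A.carrier) : Prop :=
  ∀ ρ : A.carrier → A.carrier → Prop, IsCongruenceOn A ρ →
    (∀ a b, θ a b → ρ a b) → (∀ a b, φ a b → ρ a b) → ρ x y

/-- Congruence permutability for all members of a class. -/
def CongPermutableClass (K : Set (Alg L)) : Prop :=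
  ∀ A : Alg L, A ∈ K → ∀ θ φ : A.carrier → A.carrier → Prop,
    IsCongruenceOn A θ → IsCongruenceOn A φ →
      ∀ x y : A.carrier, (∃ z, θ x z ∧ φ z y) ↔ ∃ z, φ x z ∧ θ z y

/-- Congruence distributivity for all members of a class. -/
def CongDistributiveClass (K : Set (Alg L)) : Prop :=
  ∀ A : Alg L, A ∈ K → ∀ θ φ ψ : A.carrier → A.carrier → Prop,
    IsCongruenceOn A θ → IsCongruenceOn A φ → IsCongruenceOn A ψ →
      ∀ x y : A.carrier,
        (θ x y ∧ congJoin A φ ψ x y) ↔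
          congJoin A (fun a b => θ a b ∧ φ a b) (fun a b => θ a b ∧ ψ a b) x y

/-- The congruence extension property. -/
def HasCEP (K : Set (Alg L)) : Prop :=
  ∀ A B : Alg L, A ∈ K → B ∈ K → ∀ e : A.carrier ↪[L] B.carrier,
    ∀ θ : A.carrier → A.carrier → Prop, IsCongruenceOn A θ →
      ∃ ρ : B.carrier → B.carrier → Prop, IsCongruenceOn B ρ ∧
        ∀ x y : A.carrier, θ x y ↔ ρ (e x) (e y)

/-- The language consisting of one new function symbol `gᵢ` of arity `ar i` for each `i`. -/
def newLang {ι : Type u} (ar : ι → ℕ) : FirstOrder.Language.{u, u} where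
  Functions := fun n => { i : ι // ar i = n }
  Relations := fun _ => PEmpty

/-- The `L`-reduct of an algebra in an expanded language `L.sum N`. -/
def algReduct {N : FirstOrder.Language.{u, u}} (B : Alg (L.sum N)) : Alg L where
  carrier := B.carrier
  str := (LHom.sumInl : L →ᴸ L.sum N).reduct B.carrier

/-- The class `K[L_F]` of expansions of members of `K` on which each operation in the family
`f` is total, interpreting the new symbol `gᵢ` as `f i`. -/
def expClass (K : Set (Alg L)) {ι : Type u} (ar : ι → ℕ)
    (f : ∀ i, PartialFunOn K (ar i)) : Set (Alg (L.sum (newLang ar))) :=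
  { B | ∃ hB : algReduct B ∈ K,
      ∀ (i : ι) (x : Fin (ar i) → B.carrier),
        Structure.funMap (L := L.sum (newLang ar)) (M := B.carrier)
            (Sum.inr ⟨i, rfl⟩ : (L.sum (newLang ar)).Functions (ar i)) x
          ∈ f i (algReduct B) hB x }

/-- Closure under subalgebras (and isomorphic copies) inside a fixed language. -/
def SClosure {L' : FirstOrder.Language.{u, u}} (S : Set (Alg L')) : Set (Alg L') :=
  { A | ∃ B ∈ S, Nonempty (A.carrier ↪[L'] B.carrier) }

/-- Membership in `ext_pp(K)`: an extendable implicit operation defined by a pp formula. -/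
def InExtPP {K : Set (Alg L)} {n : ℕ} (f : PartialFunOn K n) : Prop :=
  IsOperationOn f ∧ (∃ φ : L.Formula (Fin (n + 1)), IsPP φ ∧ DefinedBy f φ) ∧ Extendable f

/-- `M` is the pp expansion of `K` induced by the family `f` of extendable pp-definable
implicit operations, with one new symbol of arity `ar i` for each `i`. -/
def IsPPExpansionVia (K : Set (Alg L)) {ι : Type u} (ar : ι → ℕ)
    (f : ∀ i, PartialFunOn K (ar i)) (M : Set (Alg (L.sum (newLang ar)))) : Prop :=
  (∀ i, 0 < ar i) ∧ (∀ i, InExtPP (f i)) ∧ M = SClosure (expClass K ar f)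

/-- Every implicit operation of `K` is interpolated in `M` by a set of terms of the expanded
language. -/
def InterpolatesByTermsInExp (K : Set (Alg L)) {ι : Type u} {ar : ι → ℕ}
    (M : Set (Alg (L.sum (newLang ar)))) : Prop :=
  ∀ n : ℕ, 0 < n → ∀ g : PartialFunOn K n, IsImplicitOp g →
    ∃ T : Set ((L.sum (newLang ar)).Term (Fin n)),
      ∀ A : Alg (L.sum (newLang ar)), A ∈ M →
        ∀ (hA : algReduct A ∈ K) (x : Fin n → A.carrier) (b : A.carrier),
          b ∈ g (algReduct A) hA x → ∃ t ∈ T, t.realize x = b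

/-- `M` is a Beth companion of `K` (via the given expansion datum). -/
def IsBethCompanionVia (K : Set (Alg L)) {ι : Type u} (ar : ι → ℕ)
    (f : ∀ i, PartialFunOn K (ar i)) (M : Set (Alg (L.sum (newLang ar)))) : Prop :=
  IsPPExpansionVia K ar f M ∧ InterpolatesByTermsInExp K M

/-- A pp expansion is congruence preserving when the `M`-congruences of each member of `M`
coincide with the `K`-congruences of its `L`-reduct. -/
def CongPreserving {N : FirstOrder.Language.{u, u}} (K : Set (Alg L))
    (M : Set (Alg (L.sum N))) : Prop :=
  ∀ A : Alg (L.sum N), A ∈ M → ∀ θ : A.carrier → A.carrier → Prop,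
    IsRelCong M A θ ↔ IsRelCong K (algReduct A) θ

/-- Reinterpretation of an `L₁`-algebra as an `L₂`-algebra along a map sending `L₂`-symbols to
`L₁`-terms (both languages are assumed to be purely functional). -/
def reinterpret {L₁ L₂ : FirstOrder.Language.{u, u}} (ρ : ∀ n, L₂.Functions n → L₁.Term (Fin n))
    (A : Alg L₁) : Alg L₂ where
  carrier := A.carrier
  str :=
    { funMap := fun {k} s x => (ρ k s).realize x
      RelMap := fun {k} _ _ => False }

/-- Two expansions of the same base language `L` are faithfully term equivalent relative to
`L`. -/
def FaithfullyTermEquivRel (L : FirstOrder.Language.{u, u}) {N₁ N₂ : FirstOrder.Language.{u, u}}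
    (M₁ : Set (Alg (L.sum N₁))) (M₂ : Set (Alg (L.sum N₂))) : Prop :=
  ∃ (τ : ∀ n, (L.sum N₁).Functions n → (L.sum N₂).Term (Fin n))
    (ρ : ∀ n, (L.sum N₂).Functions n → (L.sum N₁).Term (Fin n)),
    (∀ (n : ℕ) (s : L.Functions n),
      τ n (Sum.inl s) = Term.func (Sum.inl s : (L.sum N₂).Functions n) Term.var) ∧
    (∀ (n : ℕ) (s : L.Functions n),
      ρ n (Sum.inl s) = Term.func (Sum.inl s : (L.sum N₁).Functions n) Term.var) ∧
    (∀ A : Alg (L.sum N₁), A ∈ M₁ → reinterpret ρ A ∈ M₂) ∧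
    (∀ B : Alg (L.sum N₂), B ∈ M₂ → reinterpret τ B ∈ M₁) ∧
    (∀ A : Alg (L.sum N₁), A ∈ M₁ → reinterpret τ (reinterpret ρ A) = A) ∧
    (∀ B : Alg (L.sum N₂), B ∈ M₂ → reinterpret ρ (reinterpret τ B) = B)

/-- The language of monoids: one binary operation and one constant. -/
def Lmon : FirstOrder.Language.{0, 0} where
  Functions := fun n => match n with
    | 0 => PUnit
    | 2 => PUnit
    | _ => PEmpty
  Relations := fun _ => PEmpty

instance : Lmon.IsAlgebraic := fun _ => inferInstanceAs (IsEmpty PEmpty)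

/-- The multiplication symbol. -/
def mulSym : Lmon.Functions 2 := PUnit.unit

/-- The unit symbol. -/
def oneSym : Lmon.Functions 0 := PUnit.unit

/-- The interpretation of the multiplication symbol. -/
def mmul {M : Type} [Lmon.Structure M] (a b : M) : M :=
  Structure.funMap (L := Lmon) mulSym ![a, b]

/-- The interpretation of the unit symbol. -/
def mone {M : Type} [Lmon.Structure M] : M :=
  Structure.funMap (L := Lmon) oneSym ![]

/-- The variety of monoids, as a class of `Lmon`-algebras. -/
def MonCl : Set (Alg Lmon) :=
  { A | (∀ a b c : A.carrier, mmul (mmul a b) c = mmul a (mmul b c)) ∧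
        (∀ a : A.carrier, mmul a mone = a) ∧ ∀ a : A.carrier, mmul mone a = a }

/-- The variety of commutative monoids, as a class of `Lmon`-algebras. -/
def CommMonCl : Set (Alg Lmon) :=
  { A | A ∈ MonCl ∧ ∀ a b : A.carrier, mmul a b = mmul b a }


open FirstOrder Language

/-- Local closure: an algebra all of whose finite tuples come from members of `K`. -/
def LocClosed {L : FirstOrder.Language.{0, 0}} (K : Set (Alg L)) : Prop :=
  ∀ D : Alg L, (∀ (n : ℕ) (x : Fin n → D.carrier), ∃ A ∈ K, ∃ (e : A.carrier ↪[L] D.carrier)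
    (y : Fin n → A.carrier), x = fun i => e (y i)) → D ∈ K

section ext
variable {L : FirstOrder.Language.{0, 0}} {K : Set (Alg L)} {ι : Type} {ar : ι → ℕ}
  {f : ∀ i, PartialFunOn K (ar i)}

theorem op_dom {n : ℕ} {g : PartialFunOn K n} (hg : IsOperationOn g) {A B : Alg L} (hA : A ∈ K)
    (hB : B ∈ K) (h : A.carrier →[L] B.carrier) {x : Fin n → A.carrier}
    (hd : (g A hA x).Dom) : (g B hB fun i => h (x i)).Dom := by
  have := hg A B hA hB h x _ (Part.get_mem hd)
  exact this.1

theorem fin_ext (hf : ∀ i, InExtPP (f i)) {A : Alg L} (hA : A ∈ K)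
    (s : Finset (Σ i, Fin (ar i) → A.carrier)) :
    ∃ (B : Alg L) (hB : B ∈ K) (e : A.carrier ↪[L] B.carrier),
      ∀ p ∈ s, (f p.1 B hB fun j => e (p.2 j)).Dom := by
  classical
  induction s using Finset.induction_on with
  | empty => exact ⟨A, hA, Embedding.refl L _, by simp⟩
  | insert p s hp ih =>
    obtain ⟨B, hB, e, he⟩ := ih
    obtain ⟨C, hC, e', he'⟩ := (hf p.1).2.2 B hB fun j => e (p.2 j)
    refine ⟨C, hC, e'.comp e, ?_⟩
    intro q hq
    rcases Finset.mem_insert.1 hq with rfl | hq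
    · exact he'
    · exact op_dom (hf q.1).1 hB hC e'.toHom (he q hq)

theorem one_step (hU : ClosedUnderUprod K) (hf : ∀ i, InExtPP (f i)) {A : Alg L}
    (hne : Nonempty A.carrier) (hA : A ∈ K) :
    ∃ (B : Alg L) (hB : B ∈ K) (e : A.carrier ↪[L] B.carrier),
      ∀ i (x : Fin (ar i) → A.carrier), (f i B hB fun j => e (x j)).Dom := by
  classical
  choose B hB e he using fun s => fin_ext hf hA s
  let F : Ultrafilter (Finset (Σ i, Fin (ar i) → A.carrier)) := Ultrafilter.of Filter.atTop
  have hF : (F : Filter (Finset (Σ i, Fin (ar i) → A.carrier))) ≤ Filter.atTop :=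
    Ultrafilter.of_le _
  haveI : ∀ s, Nonempty (B s).carrier := fun s => hne.map (e s)
  have hFn : (F : Filter (Finset (Σ i, Fin (ar i) → A.carrier))).NeBot := F.neBot
  refine ⟨Alg.uprod F B, hU _ F B hB, ?_, ?_⟩
  · refine
      { toFun := fun a => ((fun s => e s a : ∀ s, (B s).carrier) :
          Filter.Product (F : Filter _) fun s => (B s).carrier)
        inj' := ?_
        map_fun' := ?_
        map_rel' := ?_ }
    · intro a b hab
      have h1 : ∀ᶠ s in (F : Filter _), e s a = e s b := Quotient.exact hab
      obtain ⟨s, hs⟩ := h1.exists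
      exact (e s).injective hs
    · intro n g x
      refine Eq.trans ?_ (Ultraproduct.funMap_cast (u := F) g fun i s => e s (x i)).symm
      congr 1
      funext s
      exact (e s).map_fun g x
    · intro n r x
      have : Structure.RelMap (L := L) (M := Filter.Product (F : Filter _) fun s => (B s).carrier) r
          (fun i => ((fun s => e s (x i) : ∀ s, (B s).carrier) :
          Filter.Product (F : Filter _) fun s => (B s).carrier)) ↔
          ∀ᶠ s in (F : Filter _), Structure.RelMap r (fun i => e s (x i)) :=
        relMap_quotient_mk' ((F : Filter (Finset (Σ i, Fin (ar i) → A.carrier))).productSetoid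
          fun s => (B s).carrier) r (fun i s => e s (x i))
      refine this.trans ?_
      have h2 : ∀ s, Structure.RelMap r (fun i => e s (x i)) ↔ Structure.RelMap r x :=
        fun s => (e s).map_rel r x
      simp only [h2, Filter.eventually_const]
  · intro i x
    obtain ⟨φ, -, hφ⟩ := (hf i).2.1
    have hev : ∀ᶠ s in (F : Filter (Finset (Σ i, Fin (ar i) → A.carrier))),
        (⟨i, x⟩ : Σ i, Fin (ar i) → A.carrier) ∈ s := by
      refine hF ?_
      filter_upwards [Filter.eventually_ge_atTop {(⟨i, x⟩ : Σ i, Fin (ar i) → A.carrier)}] with s hs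
      exact hs (Finset.mem_singleton_self _)
    have : ∀ s, ∃ b : (B s).carrier, (⟨i, x⟩ : Σ i, Fin (ar i) → A.carrier) ∈ s →
        b ∈ f i (B s) (hB s) fun j => e s (x j) := by
      intro s
      by_cases h : (⟨i, x⟩ : Σ i, Fin (ar i) → A.carrier) ∈ s
      · exact ⟨_, fun _ => Part.get_mem (he s _ h)⟩
      · exact ⟨Classical.arbitrary _, fun h' => absurd h' h⟩
    choose b hb using this
    have key : (b : Filter.Product (F : Filter _) fun s => (B s).carrier) ∈
        f i (Alg.uprod F B) (hU _ F B hB) fun j => ((fun s => e s (x j) : ∀ s, (B s).carrier) :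
          Filter.Product (F : Filter _) fun s => (B s).carrier) := by
      refine (hφ (Alg.uprod F B) (hU _ F B hB) _ _).2 ?_
      have h3 := (Ultraproduct.realize_formula_cast (u := F) φ
        (Fin.snoc (α := fun _ => ∀ s, (B s).carrier) (fun j s => e s (x j)) b)).2 (by
          filter_upwards [hev] with s hs
          have := (hφ _ _ _ _).1 (hb s hs)
          convert this using 1
          funext k
          refine Fin.lastCases ?_ (fun k => ?_) k <;> simp)
      convert! h3 using 1
      funext k
      refine Fin.lastCases ?_ (fun k => ?_) k
      · rw [Fin.snoc_last]
        refine Eq.trans (Fin.snoc_last (α := fun _ => (Alg.uprod F B).carrier) _ _) ?_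
        rfl
      · rw [Fin.snoc_castSucc]
        refine Eq.trans (Fin.snoc_castSucc (α := fun _ => (Alg.uprod F B).carrier) _ _ _) ?_
        rfl
    exact key.1

theorem total_ext (hU : ClosedUnderUprod K) (hK : LocClosed K) (hf : ∀ i, InExtPP (f i))
    {A : Alg L} (hne : Nonempty A.carrier) (hA : A ∈ K) :
    ∃ (B : Alg L) (hB : B ∈ K) (_ : A.carrier ↪[L] B.carrier),
      ∀ i (x : Fin (ar i) → B.carrier), (f i B hB x).Dom := by
  classical
  choose S hS e he using fun A : {A : Alg L // Nonempty A.carrier ∧ A ∈ K} =>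
    one_step hU hf A.2.1 A.2.2
  let G : ℕ → {A : Alg L // Nonempty A.carrier ∧ A ∈ K} := fun n =>
    Nat.rec ⟨A, hne, hA⟩ (fun _ B => ⟨S B, B.2.1.map (e B), hS B⟩) n
  let g : ∀ n, (G n).1.carrier ↪[L] (G (n + 1)).1.carrier := fun n => e (G n)
  let D : Alg L :=
    { carrier := Language.DirectLimit (fun n => (G n).1.carrier) (DirectedSystem.natLERec g) }
  let o : ∀ n, (G n).1.carrier ↪[L] D.carrier :=
    fun n => DirectLimit.of L ℕ (fun n => (G n).1.carrier) (DirectedSystem.natLERec g) n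
  have hsurj : ∀ (k : ℕ) (x : Fin k → D.carrier), ∃ (n : ℕ) (y : Fin k → (G n).1.carrier),
      x = fun a => o n (y a) := fun k x =>
    DirectLimit.exists_quotient_mk'_sigma_mk'_eq (fun n => (G n).1.carrier)
      (DirectedSystem.natLERec g) x
  have hog : ∀ n x, o (n + 1) (g n x) = o n x := by
    intro n x
    have := DirectLimit.of_f (L := L) (G := fun n => (G n).1.carrier)
      (f := DirectedSystem.natLERec g) (hij := Nat.le_succ n) (x := x)
    have h2 : DirectedSystem.natLERec g n (n + 1) (Nat.le_succ n) x = g n x := by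
      rw [DirectedSystem.coe_natLERec]
      exact Nat.leRecOn_succ' (C := fun n => (G n).1.carrier) (next := fun {k} => g k) x
    refine Eq.trans ?_ this
    exact congrArg (o (n + 1)) h2.symm
  have hD : D ∈ K := by
    apply hK
    intro k x
    obtain ⟨n, y, rfl⟩ := hsurj k x
    exact ⟨(G n).1, (G n).2.2, o n, y, rfl⟩
  refine ⟨D, hD, o 0, ?_⟩
  intro i x
  obtain ⟨n, y, rfl⟩ := hsurj _ x
  have h1 := op_dom (hf i).1 (hS (G n)) hD (o (n + 1)).toHom (he (G n) i y)
  have h2 : (fun a => o n (y a)) = fun j => (o (n + 1)).toHom (e (G n) (y j)) := by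
    funext j
    exact (hog n (y j)).symm
  rw [h2]
  exact h1

end ext

section prod
variable {L : FirstOrder.Language.{0, 0}}

theorem term_prod {α : Type} (A B : Alg L) (t : L.Term α) (x : α → (Alg.prod A B).carrier) :
    t.realize x = ((t.realize fun a => (x a).1 : A.carrier),
      (t.realize fun a => (x a).2 : B.carrier)) := by
  induction t with
  | var => rfl
  | func F ts ih =>
    simp only [Term.realize]
    simp only [ih]
    rfl

theorem conj_prod {α : Type} (A B : Alg L) {k : ℕ} {φ : L.BoundedFormula α k} (h : IsConjEq φ)
    (v : α → (Alg.prod A B).carrier) (xs : Fin k → (Alg.prod A B).carrier)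
    (h1 : φ.Realize (M := A.carrier) (fun a => (v a).1) (fun j => (xs j).1))
    (h2 : φ.Realize (M := B.carrier) (fun a => (v a).2) (fun j => (xs j).2)) :
    φ.Realize v xs := by
  induction h with
  | top => exact BoundedFormula.realize_top.2 trivial
  | equal t₁ t₂ =>
    simp only [BoundedFormula.Realize] at *
    rw [term_prod, term_prod]
    have e1 : (fun a => (Sum.elim v xs a).1) = Sum.elim (fun a => (v a).1) (fun j => (xs j).1) := by
      funext a; cases a <;> rfl
    have e2 : (fun a => (Sum.elim v xs a).2) = Sum.elim (fun a => (v a).2) (fun j => (xs j).2) := by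
      funext a; cases a <;> rfl
    rw [e1, e2, h1, h2]
  | inf _ _ ih1 ih2 =>
    rw [BoundedFormula.realize_inf] at h1 h2 ⊢
    exact ⟨ih1 h1.1 h2.1, ih2 h1.2 h2.2⟩

theorem snoc_fst {k : ℕ} (A B : Alg L) (xs : Fin k → (Alg.prod A B).carrier)
    (c : (Alg.prod A B).carrier) :
    (fun j => (Fin.snoc (α := fun _ => (Alg.prod A B).carrier) xs c j).1) =
      Fin.snoc (α := fun _ => A.carrier) (fun j => (xs j).1) c.1 := by
  funext j
  refine Fin.lastCases ?_ (fun j => ?_) j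
  · rw [Fin.snoc_last, Fin.snoc_last]
  · rw [Fin.snoc_castSucc, Fin.snoc_castSucc]

theorem snoc_snd {k : ℕ} (A B : Alg L) (xs : Fin k → (Alg.prod A B).carrier)
    (c : (Alg.prod A B).carrier) :
    (fun j => (Fin.snoc (α := fun _ => (Alg.prod A B).carrier) xs c j).2) =
      Fin.snoc (α := fun _ => B.carrier) (fun j => (xs j).2) c.2 := by
  funext j
  refine Fin.lastCases ?_ (fun j => ?_) j
  · rw [Fin.snoc_last, Fin.snoc_last]
  · rw [Fin.snoc_castSucc, Fin.snoc_castSucc]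

theorem pp_prod {α : Type} (A B : Alg L) {k : ℕ} {φ : L.BoundedFormula α k} (h : IsPP φ)
    (v : α → (Alg.prod A B).carrier) (xs : Fin k → (Alg.prod A B).carrier)
    (h1 : φ.Realize (M := A.carrier) (fun a => (v a).1) (fun j => (xs j).1))
    (h2 : φ.Realize (M := B.carrier) (fun a => (v a).2) (fun j => (xs j).2)) :
    φ.Realize v xs := by
  induction h with
  | of_conjEq h => exact conj_prod A B h v xs h1 h2
  | ex _ ih =>
    rw [BoundedFormula.realize_ex] at h1 h2 ⊢
    obtain ⟨a, ha⟩ := h1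
    obtain ⟨b, hb⟩ := h2
    refine ⟨((a, b) : A.carrier × B.carrier), ih _ ?_ ?_⟩
    · convert ha using 1
      exact snoc_fst A B _ _
    · convert hb using 1
      exact snoc_snd A B _ _

theorem op_prod {K : Set (Alg L)} {n : ℕ} {g : PartialFunOn K n} (hg : InExtPP g) {A B : Alg L}
    (hA : A ∈ K) (hB : B ∈ K) (hP : Alg.prod A B ∈ K) (x : Fin n → A.carrier)
    (y : Fin n → B.carrier) (a : A.carrier) (b : B.carrier) (ha : a ∈ g A hA x)
    (hb : b ∈ g B hB y) :
    ((a, b) : A.carrier × B.carrier) ∈ g (Alg.prod A B) hP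
      fun j => ((x j, y j) : A.carrier × B.carrier) := by
  obtain ⟨φ, hφ, hd⟩ := hg.2.1
  rw [hd] at ha hb
  refine (hd (Alg.prod A B) hP _ _).2 (pp_prod A B hφ _ _ ?_ ?_)
  · exact (congrArg₂ (fun v w => BoundedFormula.Realize φ v w) (snoc_fst A B _ _)
      (Subsingleton.elim _ _)).mpr ha
  · exact (congrArg₂ (fun v w => BoundedFormula.Realize φ v w) (snoc_snd A B _ _)
      (Subsingleton.elim _ _)).mpr hb

end prod

/-- A hom of `Lmon`-algebras from a multiplicative map. -/
def mkHom {A B : Alg Lmon} (h : A.carrier → B.carrier) (h1 : h mone = mone)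
    (hm : ∀ a b, h (mmul a b) = mmul (h a) (h b)) : A.carrier →[Lmon] B.carrier where
  toFun := h
  map_fun' := by
    intro n F x
    match n, F with
    | 0, F =>
      have e1 : x = ![] := Subsingleton.elim _ _
      have e2 : h ∘ x = ![] := Subsingleton.elim _ _
      rw [e2, e1]
      exact h1
    | 1, F => exact PEmpty.elim F
    | 2, F =>
      have e1 : x = ![x 0, x 1] := by
        funext j; fin_cases j <;> rfl
      have e2 : h ∘ x = ![h (x 0), h (x 1)] := by
        funext j; fin_cases j <;> rfl
      rw [e2, e1]
      exact hm _ _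
    | (n + 3), F => exact PEmpty.elim F
  map_rel' := fun r => PEmpty.elim r

/-- A monoid as an `Lmon`-algebra. -/
def algOf (M : Type) [Monoid M] : Alg Lmon where
  carrier := M
  str :=
    { funMap := fun {k} => match k with
        | 0 => fun _ _ => 1
        | 1 => fun F _ => PEmpty.elim F
        | 2 => fun _ v => v 0 * v 1
        | _ + 3 => fun F _ => PEmpty.elim F
      RelMap := fun r _ => PEmpty.elim r }

theorem algOf_mul (M : Type) [Monoid M] (a b : (algOf M).carrier) :
    mmul a b = (show M from a) * (show M from b) := rfl

theorem algOf_one (M : Type) [Monoid M] : (mone : (algOf M).carrier) = (1 : M) := rfl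

theorem algOf_mem (M : Type) [Monoid M] : algOf M ∈ MonCl :=
  ⟨fun a b c => mul_assoc (show M from a) b c, fun a => mul_one (show M from a),
    fun a => one_mul (show M from a)⟩

theorem algOf_mem_comm (M : Type) [CommMonoid M] : algOf M ∈ CommMonCl :=
  ⟨algOf_mem M, fun a b => mul_comm (show M from a) b⟩

/-- The monoid structure of a member of `MonCl`. -/
@[reducible] def monOf {A : Alg Lmon} (hA : A ∈ MonCl) : Monoid A.carrier where
  mul := mmul
  one := mone
  mul_assoc := hA.1
  mul_one := hA.2.1
  one_mul := hA.2.2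

/-- Powers. -/
def mpow {A : Alg Lmon} (z : A.carrier) : ℕ → A.carrier
  | 0 => mone
  | n + 1 => mmul (mpow z n) z

/-- `s` times a power of `z` is a power of `z`. -/
def Stab {A : Alg Lmon} (z s : A.carrier) : Prop := ∃ p q, mmul s (mpow z p) = mpow z q

theorem mpow_eq {A : Alg Lmon} (hA : A ∈ MonCl) (z : A.carrier) (n : ℕ) :
    mpow z n = (letI := monOf hA; z ^ n) := by
  letI := monOf hA
  induction n with
  | zero => rfl
  | succ n ih =>
    change mmul (mpow z n) z = z ^ (n + 1)
    rw [pow_succ, ih]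
    rfl

theorem stab_iff {A : Alg Lmon} (hA : A ∈ MonCl) (z s : A.carrier) :
    Stab z s ↔ (letI := monOf hA; ∃ p q : ℕ, s * z ^ p = z ^ q) := by
  letI := monOf hA
  unfold Stab
  simp only [mpow_eq hA]
  rfl

theorem mul_stab {A : Alg Lmon} (hA : A ∈ MonCl) {z s t : A.carrier} (hs : Stab z s)
    (ht : Stab z t) : Stab z (mmul s t) := by
  letI := monOf hA
  rw [stab_iff hA] at *
  obtain ⟨p, q, h⟩ := hs
  obtain ⟨p', q', h'⟩ := ht
  refine ⟨p' + p, q + q', ?_⟩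
  change s * t * z ^ (p' + p) = _
  rw [pow_add, mul_assoc, ← mul_assoc t, h', ← pow_add, add_comm, pow_add, ← mul_assoc, h, pow_add]

theorem one_stab {A : Alg Lmon} (hA : A ∈ MonCl) (z : A.carrier) : Stab z mone := by
  letI := monOf hA
  rw [stab_iff hA]
  exact ⟨0, 0, one_mul (z ^ 0)⟩

theorem self_stab {A : Alg Lmon} (hA : A ∈ MonCl) (z : A.carrier) : Stab z z := by
  letI := monOf hA
  rw [stab_iff hA]
  exact ⟨0, 1, by simp⟩

/-- Implicit operations preserve stabilisers. -/
def DomCl (K : Set (Alg Lmon)) : Prop :=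
  ∀ (P : Alg Lmon) (hP : P ∈ K) (z : P.carrier) (n : ℕ) (g : PartialFunOn K n),
    IsOperationOn g → ∀ (s : Fin n → P.carrier) (y : P.carrier), (∀ j, Stab z (s j)) →
      y ∈ g P hP s → Stab z y

theorem dom_of_homs {K : Set (Alg Lmon)} {P C : Alg Lmon} (hP : P ∈ K) (hC : C ∈ K)
    {n : ℕ} {g : PartialFunOn K n} (hg : IsOperationOn g) (s : Fin n → P.carrier) (y : P.carrier)
    (hy : y ∈ g P hP s) (u v : P.carrier →[Lmon] C.carrier) (huv : ∀ j, u (s j) = v (s j)) :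
    u y = v y := by
  have h1 := hg P C hP hC u s y hy
  have h2 := hg P C hP hC v s y hy
  simp only [huv] at h1
  exact Part.mem_unique h1 h2

/-- The equivalence `s z^p = t z^q`. -/
def zSetoid (M : Type) [Monoid M] (z : M) : Setoid M where
  r s t := ∃ p q : ℕ, s * z ^ p = t * z ^ q
  iseqv :=
    { refl := fun s => ⟨0, 0, rfl⟩
      symm := fun ⟨p, q, h⟩ => ⟨q, p, h.symm⟩
      trans := by
        rintro a b c ⟨p, q, h⟩ ⟨p', q', h'⟩
        refine ⟨p + p', q' + q, ?_⟩
        rw [pow_add, ← mul_assoc, h, mul_assoc, ← pow_add, add_comm q, pow_add, ← mul_assoc, h',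
          mul_assoc, ← pow_add] }

/-- The left action on the quotient. -/
def zAct (M : Type) [Monoid M] (z : M) (a : M) :
    Quotient (zSetoid M z) → Quotient (zSetoid M z) :=
  Quotient.map (fun s => a * s) (by
    rintro s t ⟨p, q, h⟩
    exact ⟨p, q, by simp only [mul_assoc]; rw [h]⟩)

theorem zAct_one (M : Type) [Monoid M] (z : M) : zAct M z 1 = id := by
  funext x
  induction x using Quotient.inductionOn with
  | h s => simp [zAct]

theorem zAct_mul (M : Type) [Monoid M] (z a b : M) :
    zAct M z (a * b) = zAct M z a ∘ zAct M z b := by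
  funext x
  induction x using Quotient.inductionOn with
  | h s => simp [zAct, mul_assoc]

/-- The linear action. -/
noncomputable def zLin (M : Type) [Monoid M] (z : M) (a : M) :
    (Quotient (zSetoid M z) →₀ ℤ) →+ (Quotient (zSetoid M z) →₀ ℤ) :=
  Finsupp.mapDomain.addMonoidHom (zAct M z a)

theorem zLin_one (M : Type) [Monoid M] (z : M) (v) : zLin M z 1 v = v := by
  simp [zLin, zAct_one]

theorem zLin_mul (M : Type) [Monoid M] (z a b : M) (v) :
    zLin M z (a * b) v = zLin M z a (zLin M z b v) := by
  simp [zLin, zAct_mul, Finsupp.mapDomain_comp]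

theorem domCl_mon : DomCl MonCl := by
  intro P hP z n g hg s y hs hy
  letI := monOf hP
  let p0 : Quotient (zSetoid P.carrier z) →₀ ℤ := Finsupp.single (Quotient.mk _ 1) 1
  let V := Quotient (zSetoid P.carrier z) →₀ ℤ
  let u : P.carrier →[Lmon] (algOf (Function.End V)).carrier :=
    mkHom (B := algOf (Function.End V)) (fun a => (fun v : V => zLin P.carrier z a v))
      (funext fun v => zLin_one P.carrier z v) (fun a b => funext fun v => zLin_mul P.carrier z a b v)
  let w : P.carrier →[Lmon] (algOf (Function.End V)).carrier :=
    mkHom (B := algOf (Function.End V)) (fun a => (fun v : V => zLin P.carrier z a (v - p0) + p0))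
      (funext fun v => by
        refine (congrArg (· + p0) (zLin_one P.carrier z _)).trans ?_
        exact sub_add_cancel v p0)
      (fun a b => funext fun v => by
        refine (congrArg (· + p0) (zLin_mul P.carrier z a b _)).trans ?_
        change _ = zLin P.carrier z a (zLin P.carrier z b (v - p0) + p0 - p0) + p0
        rw [add_sub_cancel_right])
  have hfix : ∀ a : P.carrier, Stab z a → zLin P.carrier z a p0 = p0 := by
    intro a ha
    rw [stab_iff hP] at ha
    obtain ⟨p, q, h⟩ := ha
    simp only [zLin, p0, Finsupp.mapDomain.addMonoidHom_apply, Finsupp.mapDomain_single]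
    congr 1
    apply Quotient.sound
    exact ⟨p, q, by
      change a * 1 * z ^ p = 1 * z ^ q
      rw [mul_one, one_mul]; exact h⟩
  have huw := dom_of_homs hP (algOf_mem (Function.End V)) hg s y hy u w (by
    intro j
    funext v
    change zLin P.carrier z (s j) v = zLin P.carrier z (s j) (v - p0) + p0
    rw [map_sub, hfix _ (hs j), sub_add_cancel])
  have h1 : zLin P.carrier z y p0 = zLin P.carrier z y (p0 - p0) + p0 := congrFun huw p0
  rw [sub_self, map_zero, zero_add] at h1
  simp only [zLin, p0, Finsupp.mapDomain.addMonoidHom_apply, Finsupp.mapDomain_single] at h1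
  have h2 := Finsupp.single_left_injective (one_ne_zero) h1
  obtain ⟨p, q, h⟩ := Quotient.exact h2
  rw [stab_iff hP]
  have h : y * 1 * z ^ p = 1 * z ^ q := h
  rw [mul_one, one_mul] at h
  exact ⟨p, q, h⟩

theorem domCl_comm : DomCl CommMonCl := by
  intro P hP z n g hg s y hs hy
  letI : CommMonoid P.carrier := { monOf hP.1 with mul_comm := hP.2 }
  let c : Con P.carrier :=
    { zSetoid P.carrier z with
      mul' := by
        rintro a b a' b' ⟨p, q, h⟩ ⟨p', q', h'⟩
        refine ⟨p + p', q + q', ?_⟩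
        rw [pow_add, pow_add, mul_mul_mul_comm, h, h', mul_mul_mul_comm] }
  let u : P.carrier →[Lmon] (algOf c.Quotient).carrier :=
    mkHom (B := algOf c.Quotient) (fun a => (a : c.Quotient)) rfl (fun _ _ => rfl)
  let w : P.carrier →[Lmon] (algOf c.Quotient).carrier :=
    mkHom (B := algOf c.Quotient) (fun _ => (1 : c.Quotient)) rfl
      (fun _ _ => (mul_one (1 : c.Quotient)).symm)
  have huw := dom_of_homs hP (algOf_mem_comm c.Quotient) hg s y hy u w (by
    intro j
    have := hs j
    rw [stab_iff hP.1] at this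
    obtain ⟨p, q, h⟩ := this
    exact (Con.eq c).2 ⟨p, q, by rw [one_mul]; exact h⟩)
  obtain ⟨p, q, h⟩ := (Con.eq c).1 (huw : ((y : c.Quotient) = ((1 : P.carrier) : c.Quotient)))
  rw [stab_iff hP.1]
  rw [one_mul] at h
  exact ⟨p, q, h⟩

theorem emb_mul {A B : Alg Lmon} (e : A.carrier ↪[Lmon] B.carrier) (a b : A.carrier) :
    e (mmul a b) = mmul (e a) (e b) := by
  refine (e.map_fun mulSym ![a, b]).trans ?_
  unfold mmul
  congr 1
  funext j
  fin_cases j <;> rfl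

theorem hom_mul {A B : Alg Lmon} (e : A.carrier →[Lmon] B.carrier) (a b : A.carrier) :
    e (mmul a b) = mmul (e a) (e b) := by
  refine (e.map_fun mulSym ![a, b]).trans ?_
  unfold mmul
  congr 1
  funext j
  fin_cases j <;> rfl

theorem emb_one {A B : Alg Lmon} (e : A.carrier ↪[Lmon] B.carrier) :
    e (mone : A.carrier) = mone := by
  refine (e.map_fun oneSym ![]).trans ?_
  unfold mone
  congr 1
  exact Subsingleton.elim _ _

theorem hom_one {A B : Alg Lmon} (e : A.carrier →[Lmon] B.carrier) :
    e (mone : A.carrier) = mone := by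
  refine (e.map_fun oneSym ![]).trans ?_
  unfold mone
  congr 1
  exact Subsingleton.elim _ _

theorem prod_mul (A B : Alg Lmon) (a c : A.carrier) (b d : B.carrier) :
    mmul (M := (Alg.prod A B).carrier) ((a, b) : A.carrier × B.carrier)
      ((c, d) : A.carrier × B.carrier) = ((mmul a c, mmul b d) : A.carrier × B.carrier) := by
  refine Prod.ext ?_ ?_
  · refine congrArg (Structure.funMap (L := Lmon) (M := A.carrier) mulSym) ?_
    funext j; fin_cases j <;> rfl
  · refine congrArg (Structure.funMap (L := Lmon) (M := B.carrier) mulSym) ?_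
    funext j; fin_cases j <;> rfl

theorem prod_one (A B : Alg Lmon) :
    (mone : (Alg.prod A B).carrier) = ((mone, mone) : A.carrier × B.carrier) := by
  refine Prod.ext ?_ ?_
  · refine congrArg (Structure.funMap (L := Lmon) (M := A.carrier) oneSym) ?_
    exact Subsingleton.elim _ _
  · refine congrArg (Structure.funMap (L := Lmon) (M := B.carrier) oneSym) ?_
    exact Subsingleton.elim _ _

theorem prod_pow (A B : Alg Lmon) (a : A.carrier) (b : B.carrier) (n : ℕ) :
    mpow (A := Alg.prod A B) ((a, b) : A.carrier × B.carrier) n =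
      ((mpow a n, mpow b n) : A.carrier × B.carrier) := by
  induction n with
  | zero => exact prod_one A B
  | succ n ih =>
    change mmul (mpow (A := Alg.prod A B) _ n) _ = _
    rw [ih]
    exact prod_mul A B _ _ _ _

theorem prod_mem {A B : Alg Lmon} (hA : A ∈ MonCl) (hB : B ∈ MonCl) : Alg.prod A B ∈ MonCl := by
  refine ⟨?_, ?_, ?_⟩
  · rintro ⟨a, a'⟩ ⟨b, b'⟩ ⟨c, c'⟩
    rw [prod_mul, prod_mul, prod_mul, prod_mul, hA.1, hB.1]
  · rintro ⟨a, a'⟩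
    rw [prod_one, prod_mul, hA.2.1, hB.2.1]
  · rintro ⟨a, a'⟩
    rw [prod_one, prod_mul, hA.2.2, hB.2.2]

theorem prod_mem_comm {A B : Alg Lmon} (hA : A ∈ CommMonCl) (hB : B ∈ CommMonCl) :
    Alg.prod A B ∈ CommMonCl := by
  refine ⟨prod_mem hA.1 hB.1, ?_⟩
  rintro ⟨a, a'⟩ ⟨b, b'⟩
  rw [prod_mul, prod_mul, hA.2, hB.2]

/-- The class of an element in an ultraproduct. -/
def ucl {ι : Type} (F : Ultrafilter ι) (A : ι → Alg Lmon) (x : ∀ i, (A i).carrier) :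
    (Alg.uprod F A).carrier :=
  (x : Filter.Product (F : Filter ι) fun i => (A i).carrier)

theorem ucl_surj {ι : Type} (F : Ultrafilter ι) (A : ι → Alg Lmon) (a : (Alg.uprod F A).carrier) :
    ∃ x, ucl F A x = a :=
  Quotient.exists_rep a

theorem ucl_mul {ι : Type} (F : Ultrafilter ι) (A : ι → Alg Lmon) (x y : ∀ i, (A i).carrier) :
    mmul (ucl F A x) (ucl F A y) = ucl F A fun i => mmul (x i) (y i) := by
  have h := Ultraproduct.funMap_cast (u := F) (M := fun i => (A i).carrier) mulSym ![x, y]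
  refine Eq.trans ?_ (h.trans ?_)
  · refine congrArg (Structure.funMap (L := Lmon) (M := (Alg.uprod F A).carrier) mulSym) ?_
    funext j; fin_cases j <;> rfl
  · refine congrArg (ucl F A) ?_
    funext i
    refine congrArg (Structure.funMap (L := Lmon) (M := (A i).carrier) mulSym) ?_
    funext j; fin_cases j <;> rfl

theorem ucl_one {ι : Type} (F : Ultrafilter ι) (A : ι → Alg Lmon) :
    (mone : (Alg.uprod F A).carrier) = ucl F A fun _ => mone := by
  have h := Ultraproduct.funMap_cast (u := F) (M := fun i => (A i).carrier) oneSym ![]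
  refine Eq.trans ?_ (h.trans ?_)
  · refine congrArg (Structure.funMap (L := Lmon) (M := (Alg.uprod F A).carrier) oneSym) ?_
    exact Subsingleton.elim _ _
  · refine congrArg (ucl F A) ?_
    funext i
    refine congrArg (Structure.funMap (L := Lmon) (M := (A i).carrier) oneSym) ?_
    exact Subsingleton.elim _ _

theorem uprod_mem : ClosedUnderUprod MonCl := by
  intro ι F A hA
  refine ⟨?_, ?_, ?_⟩
  · intro a b c
    obtain ⟨x, rfl⟩ := ucl_surj F A a
    obtain ⟨y, rfl⟩ := ucl_surj F A b
    obtain ⟨z, rfl⟩ := ucl_surj F A c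
    simp only [ucl_mul, (hA _).1]
  · intro a
    obtain ⟨x, rfl⟩ := ucl_surj F A a
    simp only [ucl_one, ucl_mul, (hA _).2.1]
  · intro a
    obtain ⟨x, rfl⟩ := ucl_surj F A a
    simp only [ucl_one, ucl_mul, (hA _).2.2]

theorem uprod_mem_comm : ClosedUnderUprod CommMonCl := by
  intro ι F A hA
  refine ⟨uprod_mem ι F A fun i => (hA i).1, ?_⟩
  intro a b
  obtain ⟨x, rfl⟩ := ucl_surj F A a
  obtain ⟨y, rfl⟩ := ucl_surj F A b
  rw [ucl_mul, ucl_mul]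
  congr 1
  funext i
  exact (hA i).2 _ _

theorem loc_mem : LocClosed MonCl := by
  intro D h
  refine ⟨?_, ?_, ?_⟩
  · intro a b c
    obtain ⟨A, hA, e, y, hy⟩ := h 3 ![a, b, c]
    obtain rfl : a = e (y 0) := congrFun hy 0
    obtain rfl : b = e (y 1) := congrFun hy 1
    obtain rfl : c = e (y 2) := congrFun hy 2
    simp only [← emb_mul, hA.1]
  · intro a
    obtain ⟨A, hA, e, y, hy⟩ := h 1 ![a]
    obtain rfl : a = e (y 0) := congrFun hy 0
    rw [← emb_one e, ← emb_mul, hA.2.1]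
  · intro a
    obtain ⟨A, hA, e, y, hy⟩ := h 1 ![a]
    obtain rfl : a = e (y 0) := congrFun hy 0
    rw [← emb_one e, ← emb_mul, hA.2.2]

theorem loc_mem_comm : LocClosed CommMonCl := by
  intro D h
  refine ⟨loc_mem D fun n x => ?_, ?_⟩
  · obtain ⟨A, hA, r⟩ := h n x
    exact ⟨A, hA.1, r⟩
  · intro a b
    obtain ⟨A, hA, e, y, hy⟩ := h 2 ![a, b]
    obtain rfl : a = e (y 0) := congrFun hy 0
    obtain rfl : b = e (y 1) := congrFun hy 1
    rw [← emb_mul, ← emb_mul, hA.2]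

theorem fun_stab {A : Alg Lmon} (hA : A ∈ MonCl) (z : A.carrier) {n : ℕ} (F : Lmon.Functions n)
    (s : Fin n → A.carrier) (hs : ∀ j, Stab z (s j)) : Stab z (Structure.funMap F s) := by
  match n, F with
  | 0, F =>
    obtain rfl : s = ![] := Subsingleton.elim _ _
    exact one_stab hA z
  | 1, F => exact PEmpty.elim F
  | 2, F =>
    have e1 : s = ![s 0, s 1] := by
      funext j; fin_cases j <;> rfl
    rw [e1]
    exact mul_stab hA (hs 0) (hs 1)
  | (n + 3), F => exact PEmpty.elim F

/-- The expansion of an algebra on which all the operations are total. -/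
def expAlg {K : Set (Alg Lmon)} {ι : Type} {ar : ι → ℕ} (f : ∀ i, PartialFunOn K (ar i))
    (E : Alg Lmon) (hE : E ∈ K) (ht : ∀ i x, (f i E hE x).Dom) :
    Alg (Lmon.sum (newLang ar)) where
  carrier := E.carrier
  str :=
    { funMap := fun {n} F x => Sum.elim (fun F => Structure.funMap (L := Lmon) F x)
        (fun i : { i : ι // ar i = n } =>
          (f i.1 E hE fun j => x (Fin.cast i.2 j)).get (ht _ _)) F
      RelMap := fun {n} r x => Sum.elim (fun r => Structure.RelMap (L := Lmon) r x)
        (fun r : PEmpty => PEmpty.elim r) r }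

theorem expAlg_reduct {K : Set (Alg Lmon)} {ι : Type} {ar : ι → ℕ}
    (f : ∀ i, PartialFunOn K (ar i)) (E : Alg Lmon) (hE : E ∈ K)
    (ht : ∀ i x, (f i E hE x).Dom) : algReduct (expAlg f E hE ht) = E := rfl

theorem expAlg_mem {K : Set (Alg Lmon)} {ι : Type} {ar : ι → ℕ}
    (f : ∀ i, PartialFunOn K (ar i)) (E : Alg Lmon) (hE : E ∈ K)
    (ht : ∀ i x, (f i E hE x).Dom) : expAlg f E hE ht ∈ expClass K ar f :=
  ⟨hE, fun i x => Part.get_mem (ht i x)⟩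

theorem term_stab {K : Set (Alg Lmon)} (hsub : K ⊆ MonCl)
    (hprod : ∀ A B, A ∈ K → B ∈ K → Alg.prod A B ∈ K) (hdom : DomCl K)
    {ι : Type} {ar : ι → ℕ} {f : ∀ i, PartialFunOn K (ar i)} (hf : ∀ i, InExtPP (f i))
    (E : Alg Lmon) (hE : E ∈ K) (ht : ∀ i x, (f i E hE x).Dom) (a b : E.carrier)
    (t : (Lmon.sum (newLang ar)).Term (Fin 1)) :
    Stab (A := Alg.prod E E) ((a, b) : E.carrier × E.carrier)
      (((t.realize (M := (expAlg f E hE ht).carrier) fun _ => a),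
        (t.realize (M := (expAlg f E hE ht).carrier) fun _ => b)) : E.carrier × E.carrier) := by
  have hP := hprod E E hE hE
  induction t with
  | var j => exact self_stab (hsub hP) _
  | func F ts ih =>
    rcases F with F | i
    · exact fun_stab (hsub hP) _ F _ ih
    · exact hdom (Alg.prod E E) hP _ _ (f i.1) (hf i.1).1 _ _ (fun j => ih (Fin.cast i.2 j))
        (op_prod (hf i.1) hE hE hP _ _ _ _ (Part.get_mem (ht i.1 _)) (Part.get_mem (ht i.1 _)))

/-- The inverse operation. -/
noncomputable def invOp (K : Set (Alg Lmon)) : PartialFunOn K 1 := fun A _ x =>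
  ⟨∃ b : A.carrier, mmul (x 0) b = mone ∧ mmul b (x 0) = mone, fun h => h.choose⟩

theorem mem_invOp {K : Set (Alg Lmon)} (hsub : K ⊆ MonCl) {A : Alg Lmon} (hA : A ∈ K)
    (x : Fin 1 → A.carrier) (b : A.carrier) :
    b ∈ invOp K A hA x ↔ mmul (x 0) b = mone ∧ mmul b (x 0) = mone := by
  constructor
  · rintro ⟨h, rfl⟩
    exact h.choose_spec
  · intro h
    refine ⟨⟨b, h⟩, ?_⟩
    have h' := Exists.choose_spec (p := fun b : A.carrier =>
      mmul (x 0) b = mone ∧ mmul b (x 0) = mone) ⟨b, h⟩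
    let := monOf (hsub hA)
    exact left_inv_eq_right_inv h'.2 h.1

theorem invOp_implicit {K : Set (Alg Lmon)} (hsub : K ⊆ MonCl) : IsImplicitOp (invOp K) := by
  constructor
  · let tm : Lmon.Term (Fin 2) → Lmon.Term (Fin 2) → Lmon.Term (Fin 2) :=
      fun a b => Term.func mulSym ![a, b]
    let t1 : Lmon.Term (Fin 2) := Term.func oneSym ![]
    refine ⟨((tm (Term.var 0) (Term.var 1)).equal t1) ⊓ ((tm (Term.var 1) (Term.var 0)).equal t1), ?_⟩
    intro A hA x b
    rw [mem_invOp hsub, Formula.realize_inf, Formula.realize_equal, Formula.realize_equal]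
    have hm : ∀ (v : Fin 2 → A.carrier) a b, (tm a b).realize v = mmul (a.realize v) (b.realize v) := by
      intro v a b
      refine congrArg (Structure.funMap (L := Lmon) (M := A.carrier) mulSym) ?_
      funext j; fin_cases j <;> rfl
    have h1 : ∀ (v : Fin 2 → A.carrier), t1.realize v = mone := by
      intro v
      refine congrArg (Structure.funMap (L := Lmon) (M := A.carrier) oneSym) ?_
      exact Subsingleton.elim _ _
    rw [hm, hm, h1]
    rfl
  · intro A B hA hB h x b hb
    rw [mem_invOp hsub] at hb ⊢
    rw [← hom_mul, ← hom_mul, hb.1, hb.2, hom_one]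
    exact ⟨rfl, rfl⟩

/-- The test ring. -/
abbrev RR : Type := ∀ N : ℕ, ZMod (2 ^ N)

theorem exists_inv : ∃ w : RR, 3 * w = 1 := by
  have : ∀ N : ℕ, ∃ w : ZMod (2 ^ N), 3 * w = 1 := by
    intro N
    have h : Nat.Coprime 3 (2 ^ N) := Nat.Coprime.pow_right _ (by norm_num)
    exact ⟨_, by simpa using ZMod.coe_mul_inv_eq_one 3 h⟩
  choose w hw using this
  exact ⟨w, funext hw⟩

theorem pow_inj {p q : ℕ} (h : (3 : RR) ^ p = 3 ^ q) : p = q := by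
  let N := max (3 ^ p) (3 ^ q)
  have h1 : ((3 ^ p : ℕ) : ZMod (2 ^ N)) = ((3 ^ q : ℕ) : ZMod (2 ^ N)) := by
    push_cast
    exact congrFun h N
  rw [ZMod.natCast_eq_natCast_iff'] at h1
  have hN : N < 2 ^ N := Nat.lt_two_pow_self
  rw [Nat.mod_eq_of_lt (lt_of_le_of_lt (le_max_left _ _) hN),
    Nat.mod_eq_of_lt (lt_of_le_of_lt (le_max_right _ _) hN)] at h1
  exact Nat.pow_right_injective (by norm_num) h1

theorem exists_c (q : ℕ) : ∃ c : RR, 2 ^ (q + 1) * c = 0 ∧ 2 ^ q * c ≠ 0 := by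
  refine ⟨Pi.single (q + 1) 1, ?_, ?_⟩
  · funext N
    by_cases hN : N = q + 1
    · subst hN
      have : ((2 ^ (q + 1) : ℕ) : ZMod (2 ^ (q + 1))) = 0 := ZMod.natCast_self _
      push_cast at this
      simpa using this
    · simp [hN]
  · intro h
    have h1 := congrFun h (q + 1)
    have h2 : ((2 ^ q : ℕ) : ZMod (2 ^ (q + 1))) = 0 := by
      push_cast
      simpa using h1
    rw [ZMod.natCast_eq_zero_iff] at h2
    have := Nat.le_of_dvd (by positivity) h2
    rw [pow_succ] at this
    have : 0 < 2 ^ q := by positivity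
    omega

theorem no_beth (K : Set (Alg Lmon)) (hsub : K ⊆ MonCl) (hU : ClosedUnderUprod K)
    (hloc : LocClosed K) (hprod : ∀ A B, A ∈ K → B ∈ K → Alg.prod A B ∈ K) (hdom : DomCl K)
    (hR : algOf RR ∈ K) :
    ¬ ∃ (ι : Type) (ar : ι → ℕ) (f : ∀ i, PartialFunOn K (ar i))
        (M : Set (Alg (Lmon.sum (newLang ar)))), IsBethCompanionVia K ar f M := by
  rintro ⟨ι, ar, f, M, ⟨-, hf, rfl⟩, hterms⟩
  obtain ⟨E, hE, e, ht⟩ := total_ext hU hloc hf (A := algOf RR) ⟨(1 : RR)⟩ hR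
  obtain ⟨w, hw⟩ := exists_inv
  obtain ⟨T, hT⟩ := hterms 1 one_pos (invOp K) (invOp_implicit hsub)
  let := monOf (hsub hE)
  let em : RR →* E.carrier :=
    { toFun := e
      map_one' := emb_one e
      map_mul' := emb_mul e }
  have hinj : Function.Injective em := e.injective
  obtain ⟨t, -, hte⟩ := hT (expAlg f E hE ht)
    ⟨_, expAlg_mem f E hE ht, ⟨Embedding.refl _ _⟩⟩ hE (fun _ => em 3) (em w)
    ((mem_invOp hsub hE _ _).2 ⟨by
      change em 3 * em w = 1
      rw [← map_mul, hw, map_one], by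
      change em w * em 3 = 1
      rw [← map_mul, mul_comm, hw, map_one]⟩)
  obtain ⟨p, q, hpq⟩ := term_stab hsub hprod hdom hf E hE ht (em 2) (em 3) t
  rw [prod_pow, prod_pow] at hpq
  replace hpq := (prod_mul E E _ _ _ _).symm.trans hpq
  have h1 := congrArg Prod.fst hpq
  have h2 := congrArg Prod.snd hpq
  simp only [mpow_eq (hsub hE)] at h1 h2
  obtain ⟨y, h1⟩ : ∃ y : E.carrier, y * em 2 ^ p = em 2 ^ q := ⟨_, h1⟩
  have h2 : em w * em 3 ^ p = em 3 ^ q := by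
    rw [← hte]
    exact h2
  rw [← map_pow, ← map_pow, ← map_mul] at h2
  have h2 := hinj h2
  have h3 : (3 : RR) ^ p = 3 ^ (q + 1) := by
    rw [pow_succ', ← h2, ← mul_assoc, hw, one_mul]
  obtain rfl := pow_inj h3
  obtain ⟨c, hc, hc'⟩ := exists_c q
  rw [← map_pow, ← map_pow] at h1
  have h4 : y * em 0 = em (2 ^ q * c) := by
    rw [map_mul, ← h1, mul_assoc, ← map_mul, hc]
  have h5 : y * em 0 = em 0 := by
    have : em 0 = em 0 * em 2 := by rw [← map_mul, zero_mul]
    rw [this, ← mul_assoc, h4, ← map_mul, ← map_mul]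
    congr 1
    rw [zero_mul, mul_right_comm, ← pow_succ, hc]
  exact hc' (hinj (h4.symm.trans h5))

/-- The variety of monoids and the variety of commutative monoids lack a
Beth companion. -/
theorem statement_17 :
    (¬ ∃ (ι : Type) (ar : ι → ℕ) (f : ∀ i, PartialFunOn MonCl (ar i))
        (M : Set (Alg (Lmon.sum (newLang ar)))), IsBethCompanionVia MonCl ar f M) ∧
    (¬ ∃ (ι : Type) (ar : ι → ℕ) (f : ∀ i, PartialFunOn CommMonCl (ar i))
        (M : Set (Alg (Lmon.sum (newLang ar)))), IsBethCompanionVia CommMonCl ar f M) := by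
  refine ⟨no_beth MonCl (fun _ h => h) uprod_mem loc_mem (fun _ _ => prod_mem) domCl_mon
    (algOf_mem RR), no_beth CommMonCl (fun _ h => h.1) uprod_mem_comm loc_mem_comm
    (fun _ _ => prod_mem_comm) domCl_comm (algOf_mem_comm RR)⟩

end Impl
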